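/- arXiv:1504.05361 — 2 statements merged into one kernel-verified Lean document; each statement's English description precedes it below -/
import Mathlib

section
/- For all m, n ∈ ℤ there exists a unique polynomial P_{m,n} ∈ Polynomial K such that z^{(m)} * z^{(n)} = P_{m,n}(u) * z^{(m+n)} in B. Moreover: if m·n ≥ 0 then P_{m,n} = 1; if m > 0 and n < 0 then P_{m,n} = ∏_{k∈S}(X − k) for some finite multiset S of positive integers; and if m < 0 and n > 0 then P_{m,n} = ∏_{k∈S}(X − k) for some finite multiset S of non-positive integers. -/
open Polynomial

/-- Multiplication by `X` on `K[X]`. -/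
noncomputable def Bx (K : Type*) [Field K] : Module.End K (Polynomial K) :=
  LinearMap.mulLeft K (X : Polynomial K)

/-- The derivative `d/dX` on `K[X]`. -/
noncomputable def By (K : Type*) [Field K] : Module.End K (Polynomial K) :=
  derivative

/-- `u = y·x`. -/
noncomputable def Bu (K : Type*) [Field K] : Module.End K (Polynomial K) :=
  By K * Bx K

/-- `z^{(p)} = x^p` if `p ≥ 0`, `y^{−p}` if `p < 0`. -/
noncomputable def Bz (K : Type*) [Field K] (p : ℤ) : Module.End K (Polynomial K) :=
  if 0 ≤ p then Bx K ^ p.toNat else By K ^ (-p).toNat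

theorem aux_comm (K : Type*) [Field K] : By K * Bx K = Bx K * By K + 1 := by
  refine LinearMap.ext fun f => ?_
  rw [LinearMap.add_apply, Module.End.mul_apply, Module.End.mul_apply, Module.End.one_apply]
  simp only [Bx, By, LinearMap.mulLeft_apply]
  rw [derivative_mul, derivative_X, one_mul, add_comm]

theorem aux_xu (K : Type*) [Field K] (a : ℕ) :
    Bx K ^ a * Bu K = (Bu K - (a : Module.End K (Polynomial K))) * Bx K ^ a := by
  induction a with
  | zero => simp
  | succ a ih =>
    have h1 : Bx K * Bu K = (Bu K - 1) * Bx K := by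
      simp only [Bu]
      conv_rhs => rw [aux_comm K]
      rw [add_sub_cancel_right, mul_assoc]
    have h2 : Bx K * (a : Module.End K (Polynomial K)) = a * Bx K :=
      (Nat.cast_commute a (Bx K)).eq.symm
    rw [pow_succ', mul_assoc, ih, ← mul_assoc, mul_sub, h1, h2, ← sub_mul, mul_assoc]
    push_cast
    congr 1
    abel

theorem aux_yu (K : Type*) [Field K] (a : ℕ) :
    By K ^ a * Bu K = (Bu K + (a : Module.End K (Polynomial K))) * By K ^ a := by
  induction a with
  | zero => simp
  | succ a ih =>
    have h1 : By K * Bu K = (Bu K + 1) * By K := by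
      simp only [Bu]
      conv_lhs => rw [aux_comm K]
      rw [mul_add, add_mul, mul_one, one_mul, mul_assoc]
    have h2 : By K * (a : Module.End K (Polynomial K)) = a * By K :=
      (Nat.cast_commute a (By K)).eq.symm
    rw [pow_succ', mul_assoc, ih, ← mul_assoc, mul_add, h1, h2, ← add_mul, mul_assoc]
    push_cast
    congr 1
    abel

theorem aux_z_nat (K : Type*) [Field K] (a : ℕ) : Bz K (a : ℤ) = Bx K ^ a := by
  simp [Bz]

theorem aux_z_neg (K : Type*) [Field K] (a : ℕ) : Bz K (-(a : ℤ)) = By K ^ a := by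
  rcases Nat.eq_zero_or_pos a with rfl | h
  · simp [Bz]
  · have : ¬ (0 : ℤ) ≤ -(a : ℤ) := by omega
    simp only [Bz, if_neg this]
    simp

theorem aux_xy (K : Type*) [Field K] (a b : ℕ) : ∃ S : Multiset ℤ, (∀ k ∈ S, 0 < k) ∧
    Bx K ^ a * By K ^ b =
      aeval (Bu K) (S.map fun k => X - C ((k : ℤ) : K)).prod * Bz K ((a : ℤ) - b) := by
  induction a generalizing b with
  | zero => exact ⟨0, by simp, by simp [aux_z_neg]⟩
  | succ a ih =>
    cases b with
    | zero =>
      refine ⟨0, by simp, ?_⟩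
      have := aux_z_nat K (a + 1)
      simpa using this.symm
    | succ b =>
      obtain ⟨S, hS, h⟩ := ih b
      refine ⟨((a : ℤ) + 1) ::ₘ S, ?_, ?_⟩
      · intro k hk
        rcases Multiset.mem_cons.1 hk with rfl | hk
        · omega
        · exact hS k hk
      · have e : ((a + 1 : ℕ) : ℤ) - (b + 1 : ℕ) = a - b := by push_cast; ring
        have h1 : Bx K * By K = Bu K - 1 := by rw [Bu, aux_comm]; simp
        rw [e, Multiset.map_cons, Multiset.prod_cons, map_mul, mul_assoc, ← h, pow_succ,
          pow_succ', mul_assoc, ← mul_assoc (Bx K), h1, ← mul_assoc, mul_sub, aux_xu,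
          mul_one, ← mul_assoc]
        congr 1
        simp [sub_mul, add_mul]
        abel

theorem aux_yx (K : Type*) [Field K] (a b : ℕ) : ∃ S : Multiset ℤ, (∀ k ∈ S, k ≤ 0) ∧
    By K ^ a * Bx K ^ b =
      aeval (Bu K) (S.map fun k => X - C ((k : ℤ) : K)).prod * Bz K (-(a : ℤ) + b) := by
  induction a generalizing b with
  | zero => exact ⟨0, by simp, by simp [aux_z_nat]⟩
  | succ a ih =>
    cases b with
    | zero =>
      refine ⟨0, by simp, ?_⟩
      have := aux_z_neg K (a + 1)
      simpa using this.symm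
    | succ b =>
      obtain ⟨S, hS, h⟩ := ih b
      refine ⟨(-(a : ℤ)) ::ₘ S, ?_, ?_⟩
      · intro k hk
        rcases Multiset.mem_cons.1 hk with rfl | hk
        · omega
        · exact hS k hk
      · have e : -((a + 1 : ℕ) : ℤ) + (b + 1 : ℕ) = -a + b := by push_cast; ring
        have h1 : By K * Bx K = Bu K := rfl
        rw [e, Multiset.map_cons, Multiset.prod_cons, map_mul, mul_assoc, ← h, pow_succ,
          pow_succ', mul_assoc, ← mul_assoc (By K), h1, ← mul_assoc, aux_yu, ← mul_assoc]
        congr 1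
        simp [add_mul]

theorem aux_u_pow (K : Type*) [Field K] (P : Polynomial K) (j : ℕ) :
    aeval (Bu K) P (X ^ j : Polynomial K) = P.eval ((j : K) + 1) • (X ^ j : Polynomial K) := by
  have h : Bu K (X ^ j : Polynomial K) = ((j : K) + 1) • (X ^ j : Polynomial K) := by
    simp only [Bu, Bx, By, Module.End.mul_apply, LinearMap.mulLeft_apply, ← pow_succ',
      derivative_X_pow, smul_eq_C_mul]
    simp
  exact Module.End.aeval_apply_of_hasEigenvector
    (Module.End.hasEigenvector_iff.2 ⟨Module.End.mem_eigenspace_iff.2 h, pow_ne_zero _ X_ne_zero⟩)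

theorem aux_range (K : Type*) [Field K] [CharZero K] (p : ℤ) (j : ℕ) :
    ∃ f : Polynomial K, Bz K p f = X ^ (j + p.toNat) := by
  obtain ⟨a, rfl | rfl⟩ := p.eq_nat_or_neg
  · refine ⟨X ^ j, ?_⟩
    rw [aux_z_nat, Bx, LinearMap.pow_mulLeft]
    simp [← pow_add, add_comm]
  · rw [aux_z_neg]
    have h : ∀ (a j : ℕ), ∃ f : Polynomial K, (By K ^ a) f = X ^ j := by
      intro a
      induction a with
      | zero => intro j; exact ⟨X ^ j, by simp⟩
      | succ a ih =>
        intro j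
        obtain ⟨f, hf⟩ := ih (j + 1)
        refine ⟨((j : K) + 1)⁻¹ • f, ?_⟩
        have : (j : K) + 1 ≠ 0 := by exact_mod_cast Nat.succ_ne_zero j
        rw [map_smul, pow_succ', Module.End.mul_apply, hf, By, derivative_X_pow, smul_eq_C_mul,
          ← mul_assoc, ← C_mul]
        simp [this]
    exact h _ _

theorem aux_unique (K : Type*) [Field K] [CharZero K] (p : ℤ) (P Q : Polynomial K)
    (h : aeval (Bu K) P * Bz K p = aeval (Bu K) Q * Bz K p) : P = Q := by
  apply Polynomial.eq_of_infinite_eval_eq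
  apply Set.infinite_of_injective_forall_mem (f := fun j : ℕ => ((j + p.toNat : ℕ) : K) + 1)
  · intro i j hij
    simpa using hij
  · intro j
    obtain ⟨f, hf⟩ := aux_range K p j
    have := LinearMap.congr_fun h f
    rw [Module.End.mul_apply, Module.End.mul_apply, hf, aux_u_pow, aux_u_pow] at this
    exact smul_left_injective K (pow_ne_zero _ X_ne_zero) this

theorem aux_exists (K : Type*) [Field K] [CharZero K] (m n : ℤ) :
    ∃ P : Polynomial K, Bz K m * Bz K n = aeval (Bu K) P * Bz K (m + n) ∧
        ((0 ≤ m * n → P = 1) ∧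
          (0 < m → n < 0 → ∃ S : Multiset ℤ, (∀ k ∈ S, 0 < k) ∧
            P = (S.map fun k => X - C ((k : ℤ) : K)).prod) ∧
          (m < 0 → 0 < n → ∃ S : Multiset ℤ, (∀ k ∈ S, k ≤ 0) ∧
            P = (S.map fun k => X - C ((k : ℤ) : K)).prod)) := by
  by_cases hmn : 0 ≤ m * n
  · refine ⟨1, ?_, fun _ => rfl, fun h1 h2 => absurd hmn (by nlinarith),
      fun h1 h2 => absurd hmn (by nlinarith)⟩
    rw [map_one, one_mul]
    rcases mul_nonneg_iff.1 hmn with ⟨h1, h2⟩ | ⟨h1, h2⟩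
    · lift m to ℕ using h1
      lift n to ℕ using h2
      rw [← Nat.cast_add, aux_z_nat, aux_z_nat, aux_z_nat, pow_add]
    · obtain ⟨a, rfl⟩ := Int.exists_eq_neg_ofNat h1
      obtain ⟨b, rfl⟩ := Int.exists_eq_neg_ofNat h2
      rw [← neg_add, ← Nat.cast_add, aux_z_neg, aux_z_neg, aux_z_neg, pow_add]
  · rcases mul_neg_iff.1 (not_le.1 hmn) with ⟨h1, h2⟩ | ⟨h1, h2⟩
    · lift m to ℕ using h1.le
      obtain ⟨b, rfl⟩ := Int.exists_eq_neg_ofNat h2.le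
      obtain ⟨S, hS, h⟩ := aux_xy K m b
      refine ⟨_, ?_, fun h => absurd h hmn, fun _ _ => ⟨S, hS, rfl⟩, fun h => by omega⟩
      rw [aux_z_nat, aux_z_neg, h, sub_eq_add_neg]
    · lift n to ℕ using h2.le
      obtain ⟨a, rfl⟩ := Int.exists_eq_neg_ofNat h1.le
      obtain ⟨S, hS, h⟩ := aux_yx K a n
      refine ⟨_, ?_, fun h => absurd h hmn, fun h => by omega, fun _ _ => ⟨S, hS, rfl⟩⟩
      rw [aux_z_nat, aux_z_neg, h]

/-- For all `m, n ∈ ℤ` there is a unique polynomial `P_{m,n}` with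
`z^{(m)} z^{(n)} = P_{m,n}(u) z^{(m+n)}`.  Moreover, if `mn ≥ 0` then `P_{m,n} = 1`;
if `m > 0 > n` then `P_{m,n}` is a product of linear factors `X − k` with `k`
positive integers; and if `m < 0 < n` it is such a product with `k` non-positive
integers. -/
theorem exists_unique_Pmn (K : Type*) [Field K] [CharZero K] (m n : ℤ) :
    (∃! P : Polynomial K, Bz K m * Bz K n = Polynomial.aeval (Bu K) P * Bz K (m + n)) ∧
      ∀ P : Polynomial K, Bz K m * Bz K n = Polynomial.aeval (Bu K) P * Bz K (m + n) →
        ((0 ≤ m * n → P = 1) ∧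
          (0 < m → n < 0 → ∃ S : Multiset ℤ, (∀ k ∈ S, 0 < k) ∧
            P = (S.map fun k => X - C ((k : ℤ) : K)).prod) ∧
          (m < 0 → 0 < n → ∃ S : Multiset ℤ, (∀ k ∈ S, k ≤ 0) ∧
            P = (S.map fun k => X - C ((k : ℤ) : K)).prod)) := by
  obtain ⟨P, hP, hP'⟩ := aux_exists K m n
  have key : ∀ Q : Polynomial K,
      Bz K m * Bz K n = Polynomial.aeval (Bu K) Q * Bz K (m + n) → Q = P :=
    fun Q hQ => aux_unique K (m + n) Q P (hQ.symm.trans hP)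
  refine ⟨⟨P, hP, key⟩, ?_⟩
  intro Q hQ
  rw [key Q hQ]
  exact hP'
end

section
/- The K-subalgebra of A generated by the set {x_a * ∂_b : a, b ∈ Fin (n+1)} equals {w ∈ W : w * 𝔼 = 𝔼 * w}, the centralizer of the Euler operator inside the Weyl algebra. (This is the assertion that the image of the homomorphism π : U(gl_{n+1}) → A_{n+1}(K) coincides with A_{n+1}(K)^𝔼.) -/
open MvPolynomial

/-- Multiplication by the variable `X a`. -/
noncomputable def Wx (K : Type*) [Field K] {E : Type*} (e : E) :
    Module.End K (MvPolynomial E K) :=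
  LinearMap.mulLeft K (X e)

/-- The partial derivative `∂_a`. -/
noncomputable def Wy (K : Type*) [Field K] {E : Type*} (e : E) :
    Module.End K (MvPolynomial E K) :=
  (pderiv e).toLinearMap

/-- The Weyl algebra `A_{n+1}(K)` in its standard representation: the subalgebra
of `End_K(K[x_0,…,x_n])` generated by the multiplication operators and the
partial derivatives. -/
noncomputable def WeylSubalgebra (K : Type*) [Field K] (E : Type*) :
    Subalgebra K (Module.End K (MvPolynomial E K)) :=
  Algebra.adjoin K ({g | ∃ e : E, g = Wx K e} ∪ {g | ∃ e : E, g = Wy K e})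

/-- The Euler operator `𝔼 = Σ_a x_a ∂_a`. -/
noncomputable def EulerOp (K : Type*) [Field K] (E : Type*) [Fintype E] :
    Module.End K (MvPolynomial E K) :=
  ∑ e : E, Wx K e * Wy K e


section Abstract

variable {K A ι : Type*} [Field K] [Ring A] [Algebra K A] [DecidableEq ι]

/-- The subalgebra generated by the products `x a * y b`. -/
def AbsU (K : Type*) {A ι : Type*} [Field K] [Ring A] [Algebra K A] (x y : ι → A) :
    Subalgebra K A := Algebra.adjoin K {g : A | ∃ a b : ι, g = x a * y b}

theorem absU_gen (x y : ι → A) (a b : ι) : x a * y b ∈ AbsU K x y :=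
  Algebra.subset_adjoin ⟨a, b, rfl⟩

/-- Induction by right multiplication by generators. -/
theorem absU_induction (x y : ι → A) (Q : Submodule K A)
    (h1 : (1 : A) ∈ Q) (hm : ∀ v ∈ Q, ∀ a b, v * (x a * y b) ∈ Q) :
    (AbsU K x y).toSubmodule ≤ Q := by
  intro u hu
  have key : ∀ v ∈ Q, v * u ∈ Q := by
    have hu' : u ∈ Algebra.adjoin K {g : A | ∃ a b : ι, g = x a * y b} := hu
    induction hu' using Algebra.adjoin_induction with
    | mem g hg => obtain ⟨a, b, rfl⟩ := hg; exact fun v hv => hm v hv a b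
    | algebraMap r =>
      intro v hv
      rw [← Algebra.commutes, ← Algebra.smul_def]; exact Q.smul_mem _ hv
    | add p q hp hq ihp ihq =>
      intro v hv; rw [mul_add]; exact Q.add_mem (ihp hp v hv) (ihq hq v hv)
    | mul p q hp hq ihp ihq =>
      intro v hv; rw [← mul_assoc]; exact ihq hq _ (ihp hp v hv)
  simpa using key 1 h1

/-- Span-multiplication criterion: `span x * U * span y ≤ U`. -/
theorem xUy_le (x y : ι → A)
    (hyx : ∀ a b, y a * x b = x b * y a + if a = b then 1 else 0) :
    Submodule.span K (Set.range x) * (AbsU K x y).toSubmodule * Submodule.span K (Set.range y)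
      ≤ (AbsU K x y).toSubmodule := by
  have key : ∀ u ∈ (AbsU K x y).toSubmodule, ∀ a b, x a * u * y b ∈ AbsU K x y := by
    intro u hu a b
    let Q : Submodule K A := ⨅ p : ι × ι, (AbsU K x y).toSubmodule.comap
      (LinearMap.mulLeft K (x p.1) ∘ₗ LinearMap.mulRight K (y p.2))
    have hQ : ∀ v, v ∈ Q ↔ ∀ a b, x a * (v * y b) ∈ AbsU K x y := by
      intro v; simp [Q, Submodule.mem_iInf]
    rw [mul_assoc]
    refine (hQ u).1 (absU_induction x y Q ?_ ?_ hu) a b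
    · rw [hQ]; intro a b; rw [one_mul]; exact absU_gen x y a b
    · intro v hv c d
      rw [hQ] at hv ⊢
      intro a b
      have h : x a * (v * (x c * y d) * y b) = x a * (v * y d) * (x c * y b)
          - (if d = c then 1 else 0) * (x a * (v * y b)) := by
        have h2 : x c * y d = y d * x c - if d = c then 1 else 0 := by rw [hyx]; abel
        rw [h2]; split_ifs <;> noncomm_ring
      rw [h]
      refine sub_mem (mul_mem (hv _ _) (absU_gen x y _ _)) ?_
      split_ifs
      · rw [one_mul]; exact hv _ _
      · rw [zero_mul]; exact zero_mem _
  rw [mul_assoc, Submodule.mul_le]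
  intro m hm z hz
  induction hm using Submodule.span_induction with
  | zero => simp
  | add p q _ _ hp hq => rw [add_mul]; exact add_mem hp hq
  | smul r p _ hp => rw [smul_mul_assoc]; exact Submodule.smul_mem _ _ hp
  | mem g hg =>
    obtain ⟨a, rfl⟩ := hg
    induction hz using Submodule.mul_induction_on' with
    | add p _ q _ hp hq => rw [mul_add]; exact add_mem hp hq
    | mem_mul_mem u hu m hm =>
      induction hm using Submodule.span_induction with
      | zero => simp
      | add p q _ _ hp hq => rw [mul_add, mul_add]; exact add_mem hp hq
      | smul r p _ hp =>
        rw [mul_smul_comm, mul_smul_comm]; exact Submodule.smul_mem _ _ hp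
      | mem g hg => obtain ⟨b, rfl⟩ := hg; rw [← mul_assoc]; exact key u hu a b

theorem yUx_le (x y : ι → A) (hxx : ∀ a b, x a * x b = x b * x a)
    (hyx : ∀ a b, y a * x b = x b * y a + if a = b then 1 else 0) :
    Submodule.span K (Set.range y) * (AbsU K x y).toSubmodule * Submodule.span K (Set.range x)
      ≤ (AbsU K x y).toSubmodule := by
  have key : ∀ u ∈ (AbsU K x y).toSubmodule, ∀ a b, y a * u * x b ∈ AbsU K x y := by
    intro u hu a b
    let Q : Submodule K A := ⨅ p : ι × ι, (AbsU K x y).toSubmodule.comap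
      (LinearMap.mulLeft K (y p.1) ∘ₗ LinearMap.mulRight K (x p.2))
    have hQ : ∀ v, v ∈ Q ↔ ∀ a b, y a * (v * x b) ∈ AbsU K x y := by
      intro v; simp [Q, Submodule.mem_iInf]
    rw [mul_assoc]
    refine (hQ u).1 (absU_induction x y Q ?_ ?_ hu) a b
    · rw [hQ]; intro a b; rw [one_mul, hyx]
      refine add_mem (absU_gen x y _ _) ?_
      split_ifs
      · exact one_mem _
      · exact zero_mem _
    · intro v hv c d
      rw [hQ] at hv ⊢
      intro a b
      have h : y a * (v * (x c * y d) * x b) = y a * (v * x b) * (x c * y d)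
          + (if d = b then 1 else 0) * (y a * (v * x c)) := by
        calc y a * (v * (x c * y d) * x b) = y a * (v * (x c * (y d * x b))) := by
              noncomm_ring
          _ = y a * (v * ((x c * x b) * y d)) 
              + (if d = b then 1 else 0) * (y a * (v * x c)) := by
              rw [hyx]; split_ifs <;> noncomm_ring
          _ = _ := by rw [hxx c b]; noncomm_ring
      rw [h]
      refine add_mem (mul_mem (hv _ _) (absU_gen x y _ _)) ?_
      split_ifs
      · rw [one_mul]; exact hv _ _
      · rw [zero_mul]; exact zero_mem _
  rw [mul_assoc, Submodule.mul_le]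
  intro m hm z hz
  induction hm using Submodule.span_induction with
  | zero => simp
  | add p q _ _ hp hq => rw [add_mul]; exact add_mem hp hq
  | smul r p _ hp => rw [smul_mul_assoc]; exact Submodule.smul_mem _ _ hp
  | mem g hg =>
    obtain ⟨a, rfl⟩ := hg
    induction hz using Submodule.mul_induction_on' with
    | add p _ q _ hp hq => rw [mul_add]; exact add_mem hp hq
    | mem_mul_mem u hu m hm =>
      induction hm using Submodule.span_induction with
      | zero => simp
      | add p q _ _ hp hq => rw [mul_add, mul_add]; exact add_mem hp hq
      | smul r p _ hp =>
        rw [mul_smul_comm, mul_smul_comm]; exact Submodule.smul_mem _ _ hp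
      | mem g hg => obtain ⟨b, rfl⟩ := hg; rw [← mul_assoc]; exact key u hu a b

/-- If every `z a` moves past generators modulo `U * span z`, then `span z * U ≤ U * span z`. -/
theorem zU_le (x y z : ι → A)
    (hz : ∀ a c d, z a * (x c * y d) ∈
      (AbsU K x y).toSubmodule * Submodule.span K (Set.range z)) :
    Submodule.span K (Set.range z) * (AbsU K x y).toSubmodule
      ≤ (AbsU K x y).toSubmodule * Submodule.span K (Set.range z) := by
  set U := (AbsU K x y).toSubmodule with hU
  set Z := Submodule.span K (Set.range z) with hZ
  have hUU : U * U = U := Subalgebra.isIdempotentElem_toSubmodule _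
  rw [Submodule.mul_le]
  intro m hm u hu
  let Q : Submodule K A := ⨅ p : ι, (U * Z).comap (LinearMap.mulLeft K (z p))
  have hQ : ∀ v, v ∈ Q ↔ ∀ a, z a * v ∈ U * Z := by
    intro v; simp [Q, Submodule.mem_iInf]
  have hmg : ∀ w ∈ U * Z, ∀ c d, w * (x c * y d) ∈ U * Z := by
    intro w hw c d
    induction hw using Submodule.mul_induction_on' with
    | add p _ q _ hp hq => rw [add_mul]; exact add_mem hp hq
    | mem_mul_mem u hu m hm =>
      induction hm using Submodule.span_induction with
      | zero => simp
      | add p q _ _ hp hq => rw [mul_add, add_mul]; exact add_mem hp hq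
      | smul r p _ hp =>
        rw [mul_smul_comm, smul_mul_assoc]; exact Submodule.smul_mem _ _ hp
      | mem g hg =>
        obtain ⟨b, rfl⟩ := hg
        rw [mul_assoc u, ← hUU, mul_assoc U U Z]
        exact Submodule.mul_mem_mul hu (hz b c d)
  have hu' : ∀ a, z a * u ∈ U * Z := by
    refine (hQ u).1 (absU_induction x y Q ?_ ?_ hu)
    · rw [hQ]; intro a; rw [mul_one, ← one_mul (z a)]
      exact Submodule.mul_mem_mul (one_mem (AbsU K x y)) (Submodule.subset_span ⟨a, rfl⟩)
    · intro v hv c d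
      rw [hQ] at hv ⊢
      intro a
      rw [← mul_assoc]
      exact hmg _ (hv a) c d
  induction hm using Submodule.span_induction with
  | zero => simp
  | add p q _ _ hp hq => rw [add_mul]; exact add_mem hp hq
  | smul r p _ hp => rw [smul_mul_assoc]; exact Submodule.smul_mem _ _ hp
  | mem g hg => obtain ⟨a, rfl⟩ := hg; exact hu' a

theorem xU_le (x y : ι → A) (hxx : ∀ a b, x a * x b = x b * x a)
    (hyx : ∀ a b, y a * x b = x b * y a + if a = b then 1 else 0) :
    Submodule.span K (Set.range x) * (AbsU K x y).toSubmodule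
      ≤ (AbsU K x y).toSubmodule * Submodule.span K (Set.range x) := by
  apply zU_le
  intro a c d
  have h : x a * (x c * y d) = (x c * y d) * x a - (if d = a then 1 else 0) * x c := by
    rw [mul_assoc, hyx, ← mul_assoc, hxx]; split_ifs <;> noncomm_ring
  rw [h]
  refine sub_mem (Submodule.mul_mem_mul (absU_gen x y _ _) (Submodule.subset_span ⟨a, rfl⟩))
    (Submodule.mul_mem_mul ?_ (Submodule.subset_span ⟨c, rfl⟩))
  split_ifs
  · exact one_mem (AbsU K x y)
  · exact zero_mem _

theorem yU_le (x y : ι → A) (hyy : ∀ a b, y a * y b = y b * y a)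
    (hyx : ∀ a b, y a * x b = x b * y a + if a = b then 1 else 0) :
    Submodule.span K (Set.range y) * (AbsU K x y).toSubmodule
      ≤ (AbsU K x y).toSubmodule * Submodule.span K (Set.range y) := by
  apply zU_le
  intro a c d
  have h : y a * (x c * y d) = (x c * y d) * y a + (if a = c then 1 else 0) * y d := by
    rw [← mul_assoc, hyx, add_mul, mul_assoc, hyy, mul_assoc]
  rw [h]
  refine add_mem (Submodule.mul_mem_mul (absU_gen x y _ _) (Submodule.subset_span ⟨a, rfl⟩))
    (Submodule.mul_mem_mul ?_ (Submodule.subset_span ⟨d, rfl⟩))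
  split_ifs
  · exact one_mem (AbsU K x y)
  · exact zero_mem _

/-- The algebra generated by all `x`, `y` is the sum of the graded pieces. -/
theorem adjoin_le_pieces (x y : ι → A) (hxx : ∀ a b, x a * x b = x b * x a)
    (hyy : ∀ a b, y a * y b = y b * y a)
    (hyx : ∀ a b, y a * x b = x b * y a + if a = b then 1 else 0)
    (w : A) (hw : w ∈ Algebra.adjoin K (({g | ∃ e, g = x e} ∪ {g | ∃ e, g = y e}) : Set A)) :
    w ∈ (⨆ k : ℕ, (AbsU K x y).toSubmodule * Submodule.span K (Set.range x) ^ k) ⊔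
      (⨆ k : ℕ, (AbsU K x y).toSubmodule * Submodule.span K (Set.range y) ^ k) := by
  have h1 := xUy_le (K := K) x y hyx
  have h2 := yUx_le (K := K) x y hxx hyx
  have h3 := xU_le (K := K) x y hxx hyx
  have h4 := yU_le (K := K) x y hyy hyx
  have hone : (1 : A) ∈ (AbsU K x y).toSubmodule := one_mem (AbsU K x y)
  have hmx : ∀ a, x a ∈ Submodule.span K (Set.range x) :=
    fun a => Submodule.subset_span ⟨a, rfl⟩
  have hmy : ∀ a, y a ∈ Submodule.span K (Set.range y) :=
    fun a => Submodule.subset_span ⟨a, rfl⟩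
  generalize (AbsU K x y).toSubmodule = U at *
  generalize Submodule.span K (Set.range x) = X at *
  generalize Submodule.span K (Set.range y) = Y at *
  set T := (⨆ k : ℕ, U * X ^ k) ⊔ (⨆ k : ℕ, U * Y ^ k) with hT
  have hTX : ∀ k, U * X ^ k ≤ T := fun k => (le_iSup (fun k => U * X ^ k) k).trans le_sup_left
  have hTY : ∀ k, U * Y ^ k ≤ T := fun k => (le_iSup (fun k => U * Y ^ k) k).trans le_sup_right
  have up : ∀ Z : Submodule K A, Z * U ≤ U * Z → ∀ k, Z * (U * Z ^ k) ≤ U * Z ^ (k + 1) := by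
    intro Z hZ k
    rw [pow_succ', ← mul_assoc, ← mul_assoc]
    exact mul_le_mul' hZ le_rfl
  have down : ∀ Z V : Submodule K A, V * U * Z ≤ U → ∀ k, V * (U * Z ^ (k + 1)) ≤ U * Z ^ k := by
    intro Z V hZ k
    rw [pow_succ', ← mul_assoc, ← mul_assoc]
    exact mul_le_mul' hZ le_rfl
  have hXT : X * T ≤ T := by
    rw [hT, Submodule.mul_sup, Submodule.mul_iSup, Submodule.mul_iSup, ← hT]
    refine sup_le (iSup_le fun k => (up X h3 k).trans (hTX _)) (iSup_le fun k => ?_)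
    cases k with
    | zero => simpa using (up X h3 0).trans (hTX _)
    | succ k => exact (down Y X h1 k).trans (hTY _)
  have hYT : Y * T ≤ T := by
    rw [hT, Submodule.mul_sup, Submodule.mul_iSup, Submodule.mul_iSup, ← hT]
    refine sup_le (iSup_le fun k => ?_) (iSup_le fun k => (up Y h4 k).trans (hTY _))
    cases k with
    | zero => simpa using (up Y h4 0).trans (hTY _)
    | succ k => exact (down X Y h2 k).trans (hTX _)
  have key : ∀ t ∈ T, w * t ∈ T := by
    induction hw using Algebra.adjoin_induction with
    | mem g hg =>
      intro t ht
      rcases hg with ⟨a, rfl⟩ | ⟨a, rfl⟩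
      · exact hXT (Submodule.mul_mem_mul (hmx a) ht)
      · exact hYT (Submodule.mul_mem_mul (hmy a) ht)
    | algebraMap r =>
      intro v hv
      rw [← Algebra.smul_def]; exact T.smul_mem _ hv
    | add p q hp hq ihp ihq =>
      intro v hv; rw [add_mul]; exact T.add_mem (ihp v hv) (ihq v hv)
    | mul p q hp hq ihp ihq =>
      intro v hv; rw [mul_assoc]; exact ihp _ (ihq v hv)
  have h1T : (1 : A) ∈ T := hTX 0 (by simpa using hone)
  simpa using key 1 h1T

/-- The inner derivation `[E, ·]`. -/
def adE (K : Type*) {A : Type*} [Field K] [Ring A] [Algebra K A] (E : A) : Module.End K A :=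
  LinearMap.mulLeft K E - LinearMap.mulRight K E

theorem mem_eig (E v : A) (μ : K) :
    v ∈ (adE K E).eigenspace μ ↔ E * v - v * E = μ • v := by
  rw [Module.End.mem_eigenspace_iff]; simp [adE]

theorem eig_mul (E : A) (μ ν : K) :
    (adE K E).eigenspace μ * (adE K E).eigenspace ν ≤ (adE K E).eigenspace (μ + ν) := by
  rw [Submodule.mul_le]
  intro p hp q hq
  rw [mem_eig] at *
  calc E * (p * q) - p * q * E = (E * p - p * E) * q + p * (E * q - q * E) := by noncomm_ring
    _ = _ := by rw [hp, hq, add_smul, smul_mul_assoc, mul_smul_comm]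

theorem eig_pow (E : A) (μ : K) (Z : Submodule K A) (hZ : Z ≤ (adE K E).eigenspace μ) (k : ℕ) :
    Z ^ k ≤ (adE K E).eigenspace (k * μ) := by
  induction k with
  | zero =>
    rw [pow_zero, Submodule.one_le, mem_eig]; simp
  | succ k ih =>
    rw [pow_succ]
    refine (mul_le_mul' ih hZ).trans ((eig_mul E _ _).trans (le_of_eq ?_))
    push_cast; ring_nf

theorem abs_main [CharZero K] (x y : ι → A) (E : A) (hxx : ∀ a b, x a * x b = x b * x a)
    (hyy : ∀ a b, y a * y b = y b * y a)
    (hyx : ∀ a b, y a * x b = x b * y a + if a = b then 1 else 0)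
    (hEx : ∀ a, E * x a - x a * E = x a) (hEy : ∀ a, E * y a - y a * E = - y a)
    (w : A) : w ∈ AbsU K x y ↔
      w ∈ Algebra.adjoin K (({g | ∃ e, g = x e} ∪ {g | ∃ e, g = y e}) : Set A) ∧
        w * E = E * w := by
  have hX : Submodule.span K (Set.range x) ≤ (adE K E).eigenspace 1 := by
    rw [Submodule.span_le]; rintro _ ⟨a, rfl⟩
    rw [SetLike.mem_coe, mem_eig, hEx, one_smul]
  have hY : Submodule.span K (Set.range y) ≤ (adE K E).eigenspace (-1) := by
    rw [Submodule.span_le]; rintro _ ⟨a, rfl⟩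
    rw [SetLike.mem_coe, mem_eig, hEy, neg_smul, one_smul]
  have hU : (AbsU K x y).toSubmodule ≤ (adE K E).eigenspace 0 := by
    apply absU_induction
    · rw [mem_eig]; simp
    · intro v hv a b
      have h := eig_mul E _ _ (Submodule.mul_mem_mul hv (eig_mul E _ _ (Submodule.mul_mem_mul
        (hX (Submodule.subset_span ⟨a, rfl⟩)) (hY (Submodule.subset_span ⟨b, rfl⟩)))))
      simpa using h
  constructor
  · intro hw
    refine ⟨?_, ?_⟩
    · refine Algebra.adjoin_le ?_ hw
      rintro _ ⟨a, b, rfl⟩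
      exact mul_mem (Algebra.subset_adjoin (Or.inl ⟨a, rfl⟩))
        (Algebra.subset_adjoin (Or.inr ⟨b, rfl⟩))
    · have h := (mem_eig E w 0).1 (hU hw)
      rw [zero_smul, sub_eq_zero] at h
      exact h.symm
  · rintro ⟨hw, hc⟩
    have hT := adjoin_le_pieces x y hxx hyy hyx w hw
    have piece : ∀ (Z : Submodule K A) (μ : K), μ ≠ 0 → Z ≤ (adE K E).eigenspace μ →
        ∀ k : ℕ, (AbsU K x y).toSubmodule * Z ^ k ≤ (AbsU K x y).toSubmodule ⊔
          ⨆ (ν : K) (_ : ν ≠ 0), (adE K E).eigenspace ν := by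
      intro Z μ hμ hZ k
      cases k with
      | zero => simp
      | succ k =>
        refine le_trans ?_ le_sup_right
        refine le_trans ((mul_le_mul' hU (eig_pow E μ Z hZ (k + 1))).trans
          (eig_mul E _ _)) ?_
        refine le_iSup₂_of_le (0 + ((k + 1 : ℕ) : K) * μ) ?_ le_rfl
        rw [zero_add]
        exact mul_ne_zero (Nat.cast_ne_zero.2 (Nat.succ_ne_zero k)) hμ
    have hT' := (sup_le (iSup_le (piece _ 1 one_ne_zero hX))
      (iSup_le (piece _ (-1) (neg_ne_zero.2 one_ne_zero) hY))) hT
    obtain ⟨u, hu, r, hr, hur⟩ := Submodule.mem_sup.1 hT'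
    have hw0 : w ∈ (adE K E).eigenspace 0 := by
      rw [mem_eig, hc]; simp
    have hr0 : r ∈ (adE K E).eigenspace 0 := by
      have : r = w - u := by rw [← hur]; abel
      rw [this]; exact sub_mem hw0 (hU hu)
    have hd := (adE K E).eigenspaces_iSupIndep 0
    have : r = 0 := Submodule.disjoint_def.1 hd r hr0 hr
    rw [← hur, this, add_zero]; exact hu

end Abstract

section Concrete

variable (K : Type*) [Field K] {ι : Type*} [DecidableEq ι]

theorem Wxx (a b : ι) : Wx K a * Wx K b = Wx K b * Wx K a := by
  refine LinearMap.ext fun p => ?_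
  simp only [Wx, Module.End.mul_apply, LinearMap.mulLeft_apply]
  ring

theorem Wyx (a b : ι) : Wy K a * Wx K b = Wx K b * Wy K a + if a = b then 1 else 0 := by
  refine LinearMap.ext fun p => ?_
  simp only [Wx, Wy, Module.End.mul_apply, LinearMap.add_apply, LinearMap.mulLeft_apply,
    Derivation.coeFn_coe, Derivation.leibniz, pderiv_X, smul_eq_mul]
  by_cases h : a = b
  · subst h; simp
  · have h' : b ≠ a := fun e => h e.symm
    simp [h, h']

theorem Wyy (a b : ι) : Wy K a * Wy K b = Wy K b * Wy K a := by
  have h : ⁅(pderiv a : Derivation K (MvPolynomial ι K) (MvPolynomial ι K)),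
      (pderiv b : Derivation K (MvPolynomial ι K) (MvPolynomial ι K))⁆ = 0 := by
    apply MvPolynomial.derivation_ext
    intro i
    simp [Derivation.commutator_apply, pderiv_X, Pi.single_apply, apply_ite]
  refine LinearMap.ext fun p => ?_
  have h2 := congrArg (fun D => D p) h
  simp only [Derivation.commutator_apply, Derivation.coe_zero, Pi.zero_apply, sub_eq_zero] at h2
  exact h2

end Concrete

/-- The subalgebra of `End_K(K[x_0,…,x_n])` generated by `{x_a ∂_b}` equals the
centralizer of the Euler operator in the Weyl algebra: the image of
`π : U(gl_{n+1}) → A_{n+1}(K)` is `A_{n+1}(K)^𝔼`. -/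
theorem adjoin_xy_eq_euler_centralizer (K : Type*) [Field K] [CharZero K] (n : ℕ) :
    (Algebra.adjoin K
        {g : Module.End K (MvPolynomial (Fin (n + 1)) K) |
          ∃ a b : Fin (n + 1), g = Wx K a * Wy K b} : Set (Module.End K (MvPolynomial (Fin (n + 1)) K))) =
      {w : Module.End K (MvPolynomial (Fin (n + 1)) K) |
        w ∈ WeylSubalgebra K (Fin (n + 1)) ∧
          w * EulerOp K (Fin (n + 1)) = EulerOp K (Fin (n + 1)) * w} := by
  have hyx := Wyx K (ι := Fin (n + 1))
  have hxx := Wxx K (ι := Fin (n + 1))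
  have hyy := Wyy K (ι := Fin (n + 1))
  ext w
  refine abs_main (K := K) (Wx K) (Wy K) (EulerOp K (Fin (n + 1))) hxx hyy hyx ?_ ?_ w
  · intro a
    have h : ∀ e, Wx K e * Wy K e * Wx K a - Wx K a * (Wx K e * Wy K e)
        = if e = a then Wx K a else 0 := by
      intro e
      rw [mul_assoc, hyx, mul_add, ← mul_assoc, ← mul_assoc, hxx e a]
      split_ifs with he
      · subst he; simp
      · simp
    rw [EulerOp, Finset.sum_mul, Finset.mul_sum, ← Finset.sum_sub_distrib,
      Finset.sum_congr rfl fun e _ => h e]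
    simp
  · intro a
    have h : ∀ e, Wx K e * Wy K e * Wy K a - Wy K a * (Wx K e * Wy K e)
        = if e = a then - Wy K a else 0 := by
      intro e
      rw [← mul_assoc (Wy K a), hyx, add_mul, mul_assoc, mul_assoc, hyy e a]
      by_cases he : e = a
      · subst he; simp
      · have he' : a ≠ e := fun h => he h.symm
        simp [he, he']
    rw [EulerOp, Finset.sum_mul, Finset.mul_sum, ← Finset.sum_sub_distrib,
      Finset.sum_congr rfl fun e _ => h e]
    simp
end
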